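/- (Carvalho et al.) For each n ≥ 4, at least 1/8 of the threshold graphs of order n have a Q-cospectral mate. Precisely, letting t(n) denote the number of isomorphism classes of threshold graphs on n vertices and t*(n) denote the number of isomorphism classes of threshold graphs G on n vertices for which there exists a graph H on n vertices that is Q-cospectral with G but not isomorphic to G, one has t*(n) ≥ t(n)/8 for all n ≥ 4. -/

import Mathlib

open SimpleGraph

/-- The characteristic polynomial (over `ℝ`) of the adjacency matrix of a finite graph. -/
noncomputable def adjCharPoly {V : Type} [Fintype V] [DecidableEq V] (G : SimpleGraph V) :
    Polynomial ℝ :=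
  letI := Classical.decRel G.Adj
  Matrix.charpoly (G.adjMatrix ℝ)

/-- Two finite graphs are cospectral if their adjacency matrices have the same
characteristic polynomial. -/
def Cospectral {V W : Type} [Fintype V] [DecidableEq V] [Fintype W] [DecidableEq W]
    (G : SimpleGraph V) (H : SimpleGraph W) : Prop :=
  adjCharPoly G = adjCharPoly H

/-- Generalized cospectrality: the graphs are cospectral and so are their complements. -/
def GenCospectral {V W : Type} [Fintype V] [DecidableEq V] [Fintype W] [DecidableEq W]
    (G : SimpleGraph V) (H : SimpleGraph W) : Prop :=
  Cospectral G H ∧ Cospectral Gᶜ Hᶜ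

/-- A cograph is a graph with no induced path `P₄` (on 4 vertices). -/
def IsCograph {V : Type} (G : SimpleGraph V) : Prop :=
  ¬ ∃ f : Fin 4 ↪ V, ∀ i j, G.Adj (f i) (f j) ↔ (SimpleGraph.pathGraph 4).Adj i j

/-- The number of isomorphism classes of graphs on `n` vertices satisfying an
isomorphism-invariant property `P`. -/
noncomputable def classCount (n : ℕ) (P : SimpleGraph (Fin n) → Prop) : ℕ :=
  Nat.card (Quot fun G H : {G : SimpleGraph (Fin n) // P G} => Nonempty (G.1 ≃g H.1))

/-- A threshold graph: it can be built from a single vertex by repeatedly adding either an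
isolated vertex or a dominating vertex. Equivalently, there is an ordering
`σ 0, σ 1, …, σ (n-1)` of the vertices such that each vertex is isolated or dominating in
the subgraph induced on it and the earlier vertices. -/
def IsThreshold {n : ℕ} (G : SimpleGraph (Fin n)) : Prop :=
  1 ≤ n ∧ ∃ σ : Equiv.Perm (Fin n), ∀ i : Fin n,
    (∀ j < i, ¬ G.Adj (σ i) (σ j)) ∨ (∀ j < i, G.Adj (σ i) (σ j))

/-- The characteristic polynomial (over `ℝ`) of the signless Laplacian matrix
`Q(G) = D(G) + A(G)` of a finite graph. -/
noncomputable def qCharPoly {V : Type} [Fintype V] [DecidableEq V] (G : SimpleGraph V) :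
    Polynomial ℝ :=
  letI := Classical.decRel G.Adj
  Matrix.charpoly (G.degMatrix ℝ + G.adjMatrix ℝ)

/-- Two finite graphs are `Q`-cospectral if their signless Laplacian matrices have the same
characteristic polynomial. -/
def QCospectral {V W : Type} [Fintype V] [DecidableEq V] [Fintype W] [DecidableEq W]
    (G : SimpleGraph V) (H : SimpleGraph W) : Prop :=
  qCharPoly G = qCharPoly H

/-- Generalized `Q`-cospectrality: the graphs are `Q`-cospectral and so are their
complements. -/
def GenQCospectral {V W : Type} [Fintype V] [DecidableEq V] [Fintype W] [DecidableEq W]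
    (G : SimpleGraph V) (H : SimpleGraph W) : Prop :=
  QCospectral G H ∧ QCospectral Gᶜ Hᶜ

/-!
The signless Laplacian of the complement is `Q(Gᶜ) = (n - 2) I - (Q(G) - J)`, where `J` is the
all-ones matrix. So two graphs of the same order are generalized `Q`-cospectral exactly when they
agree in the characteristic polynomials `P` of `Q` and `R` of `Q - J`. An isolated vertex turns `P`
into `X P` and `R` into `X R + P`, so generalized `Q`-cospectrality survives the addition of an
isolated vertex to both graphs and, by complementation, that of a dominating vertex. The claw `K₁,₃`
is `Q`-cospectral, hence generalized `Q`-cospectral, with its complement `K₃ ∪ K₁`, and both can be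
continued by any common sequence of isolated and dominating vertices. The threshold graphs on `n`
vertices correspond to the `2 ^ (n - 1)` creation sequences, which can be recovered from the vertex
degrees; one in eight of these sequences starts with that of the claw.
-/

section Charpoly

open Polynomial Matrix

variable {R m n : Type*} [CommRing R] [Fintype m] [Fintype n] [DecidableEq m] [DecidableEq n]

theorem charpoly_scalar_sub (M : Matrix n n R) (a : R) :
    (scalar n a - M).charpoly = (-1) ^ Fintype.card n * M.charpoly.comp (C a - X) := by
  have hmatrix : (scalar n a - M).charmatrix =
      -(compRingHom (C a - X)).mapMatrix M.charmatrix := by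
    ext i j : 1
    by_cases hij : i = j
    · subst hij
      simp only [scalar_apply, charmatrix_apply_eq, Matrix.sub_apply, diagonal_apply_eq, map_sub,
        RingHom.mapMatrix_apply, coe_compRingHom, Matrix.neg_apply, map_apply, sub_comp, X_comp,
        C_comp]
      ring
    · simp [charmatrix_apply_ne, hij]
  rw [charpoly, hmatrix, det_neg, ← RingHom.map_det]
  rfl

theorem det_fromBlocks_add₂₂ [Unique m] (A : Matrix n n R) (B : Matrix n m R) (C : Matrix m n R)
    (D D' : Matrix m m R) :
    (fromBlocks A B C (D + D')).det = A.det * D.det + (fromBlocks A B C D').det := by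
  have hcol (E : Matrix n m R) (F : Matrix m m R) : fromBlocks A E C F =
      (fromBlocks A B C D).updateCol (.inr default) (Sum.elim (E · default) (F · default)) := by
    ext (i | i) (j | j) <;> simp [Subsingleton.elim _ (default : m)]
  have hsplit : Sum.elim (B · default) ((D + D') · default) =
      Sum.elim ((0 : Matrix n m R) · default) (D · default) +
        Sum.elim (B · default) (D' · default) := by
    ext (i | i) <;> simp
  rw [hcol, hsplit, det_updateCol_add, ← hcol, ← hcol, det_fromBlocks_zero₁₂]

theorem charpoly_fromBlocks_zero_sub_of_one [Unique m] (M : Matrix n n R) (D : Matrix m m R) :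
    (fromBlocks M 0 0 D - of 1).charpoly =
      D.charpoly * (M - of 1).charpoly + M.charpoly := by
  have hblocks : (fromBlocks M 0 0 D - of 1).charmatrix =
      fromBlocks (M - of 1).charmatrix (of 1) (of 1) (D.charmatrix + 1) := by
    ext (i | i) (j | j) : 1
    · simp [charmatrix_apply, diagonal_apply]
    · simp [charmatrix_apply_ne]
    · simp [charmatrix_apply_ne]
    · simp only [Subsingleton.elim i j, charmatrix_apply_eq, Matrix.sub_apply, fromBlocks_apply₂₂,
        of_apply, Pi.one_apply, map_sub, map_one, Matrix.add_apply, one_apply_eq]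
      ring
  have hschur : (M - of 1).charmatrix - (of 1 : Matrix n m R[X]) * (of 1 : Matrix m n R[X]) =
      M.charmatrix := by
    ext i j : 1
    simp only [Matrix.sub_apply, charmatrix_apply, of_apply, Pi.one_apply, map_sub, map_one,
      mul_apply, mul_one, Finset.univ_unique, Finset.sum_const, Finset.card_singleton, one_smul]
    ring
  rw [charpoly, hblocks, det_fromBlocks_add₂₂, det_fromBlocks_one₂₂, hschur, mul_comm]
  rfl

end Charpoly

section Degree

variable {V W : Type*} {G : SimpleGraph V} {H : SimpleGraph W}

theorem degree_sum_inl (v : V) [Fintype (G.neighborSet v)]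
    [Fintype ((G ⊕g H).neighborSet (.inl v))] : (G ⊕g H).degree (.inl v) = G.degree v := by
  rw [← card_neighborSet_eq_degree, ← card_neighborSet_eq_degree, ← Nat.card_eq_fintype_card,
    ← Nat.card_eq_fintype_card, neighborSet_sum_inl, Nat.card_image_of_injective Sum.inl_injective]

theorem degree_sum_inr (w : W) [Fintype (H.neighborSet w)]
    [Fintype ((G ⊕g H).neighborSet (.inr w))] : (G ⊕g H).degree (.inr w) = H.degree w := by
  rw [← card_neighborSet_eq_degree, ← card_neighborSet_eq_degree, ← Nat.card_eq_fintype_card,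
    ← Nat.card_eq_fintype_card, neighborSet_sum_inr, Nat.card_image_of_injective Sum.inr_injective]

variable [Fintype V] [Fintype W]

/-- The degree sequence of `G`, encoded as a multiset because the vertices carry no order. -/
def degreeMultiset (G : SimpleGraph V) [DecidableRel G.Adj] : Multiset ℕ :=
  Finset.univ.val.map fun v => G.degree v

theorem degreeMultiset_eq_of_iso [DecidableRel G.Adj] [DecidableRel H.Adj] (e : G ≃g H) :
    degreeMultiset G = degreeMultiset H := by
  have huniv : (Finset.univ : Finset W).val = Finset.univ.val.map e := by
    rw [← Finset.map_univ_equiv e.toEquiv]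
    rfl
  simp only [degreeMultiset, huniv, Multiset.map_map, Function.comp_apply, Iso.degree_eq]

theorem degreeMultiset_compl [DecidableEq V] [DecidableRel G.Adj] :
    degreeMultiset Gᶜ = (degreeMultiset G).map (Fintype.card V - 1 - ·) := by
  simp only [degreeMultiset, Multiset.map_map, Function.comp_apply, degree_compl]

theorem degreeMultiset_sum [DecidableRel G.Adj] [DecidableRel H.Adj] [DecidableRel (G ⊕g H).Adj] :
    degreeMultiset (G ⊕g H) = degreeMultiset G + degreeMultiset H := by
  simp only [degreeMultiset, ← Finset.univ_disjSum_univ, Finset.val_disjSum, Multiset.disjSum,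
    Multiset.map_add, Multiset.map_map, Function.comp_apply, degree_sum_inl, degree_sum_inr]

end Degree

section SignlessLaplacian

open Matrix

variable (R : Type*) [CommRing R] {V W : Type*} [Fintype V] [DecidableEq V] [Fintype W]
  [DecidableEq W] (G : SimpleGraph V) [DecidableRel G.Adj] (H : SimpleGraph W) [DecidableRel H.Adj]

/-- The signless Laplacian matrix of `G` with entries in `R`, for an arbitrary decision procedure
for adjacency; `qCharPoly` is its characteristic polynomial over `ℝ`. -/
def signlessLapMatrix : Matrix V V R := G.degMatrix R + G.adjMatrix R

theorem signlessLapMatrix_sum [DecidableRel (G ⊕g H).Adj] :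
    signlessLapMatrix R (G ⊕g H) =
      fromBlocks (signlessLapMatrix R G) 0 0 (signlessLapMatrix R H) := by
  ext (i | i) (j | j) <;>
    simp [signlessLapMatrix, degMatrix, diagonal_apply, adjMatrix_apply, degree_sum_inl,
      degree_sum_inr]

variable {G} in
theorem reindex_signlessLapMatrix {H : SimpleGraph W} [DecidableRel H.Adj] (e : G ≃g H) :
    (signlessLapMatrix R G).reindex e.toEquiv e.toEquiv = signlessLapMatrix R H := by
  ext i j
  change signlessLapMatrix R G (e.symm i) (e.symm j) = _
  simp [signlessLapMatrix, degMatrix, diagonal_apply, e.symm.map_adj_iff]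

theorem signlessLapMatrix_compl :
    signlessLapMatrix R Gᶜ =
      scalar V ((Fintype.card V : R) - 2) - (signlessLapMatrix R G - of 1) := by
  ext i j
  by_cases hij : i = j
  · subst hij
    have hdegree : (Gᶜ.degree i : R) = Fintype.card V - 1 - G.degree i := by
      have hlt := G.degree_lt_card_verts i
      rw [degree_compl, Nat.sub_sub, Nat.cast_sub (by omega), Nat.cast_add, Nat.cast_one,
        sub_add_eq_sub_sub]
    simp only [signlessLapMatrix, degMatrix, Matrix.add_apply, diagonal_apply_eq, hdegree,
      adjMatrix_apply, SimpleGraph.irrefl, ↓reduceIte, add_zero, scalar_apply, Matrix.sub_apply,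
      of_apply, Pi.one_apply]
    ring
  · by_cases hadj : G.Adj i j <;> simp [signlessLapMatrix, degMatrix, hij, hadj]

theorem charpoly_signlessLapMatrix_compl :
    (signlessLapMatrix R Gᶜ).charpoly = (-1) ^ Fintype.card V *
      (signlessLapMatrix R G - of 1).charpoly.comp
        (Polynomial.C ((Fintype.card V : R) - 2) - Polynomial.X) := by
  rw [signlessLapMatrix_compl, charpoly_scalar_sub]

theorem charpoly_signlessLapMatrix_sub_of_one :
    (signlessLapMatrix R G - of 1).charpoly = (-1) ^ Fintype.card V *
      (signlessLapMatrix R Gᶜ).charpoly.comp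
        (Polynomial.C ((Fintype.card V : R) - 2) - Polynomial.X) := by
  rw [← charpoly_scalar_sub, signlessLapMatrix_compl, sub_sub_cancel]

end SignlessLaplacian

section QCospectral

open Matrix

variable {V V' W W' : Type} [Fintype V] [DecidableEq V] [Fintype W] [DecidableEq W]
  [Fintype V'] [DecidableEq V'] [Fintype W'] [DecidableEq W']
  {G : SimpleGraph V} {G' : SimpleGraph V'} {H : SimpleGraph W} {H' : SimpleGraph W'}

theorem qCharPoly_eq_charpoly (G : SimpleGraph V) [DecidableRel G.Adj] :
    qCharPoly G = (signlessLapMatrix ℝ G).charpoly := by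
  unfold qCharPoly signlessLapMatrix
  congr!

theorem qCharPoly_eq_of_iso (e : G ≃g H) : qCharPoly G = qCharPoly H := by
  classical
  rw [qCharPoly_eq_charpoly, qCharPoly_eq_charpoly, ← reindex_signlessLapMatrix ℝ e,
    charpoly_reindex]

theorem qCharPoly_compl_eq_of_iso (e : G ≃g H) : qCharPoly Gᶜ = qCharPoly Hᶜ :=
  qCharPoly_eq_of_iso ⟨e.toEquiv, by simp [compl_adj, e.map_adj_iff]⟩

theorem qCharPoly_sum (G : SimpleGraph V) (H : SimpleGraph W) :
    qCharPoly (G ⊕g H) = qCharPoly G * qCharPoly H := by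
  classical
  rw [qCharPoly_eq_charpoly, qCharPoly_eq_charpoly, qCharPoly_eq_charpoly, signlessLapMatrix_sum,
    charpoly_fromBlocks_zero₁₂]

theorem QCospectral.card_eq (h : QCospectral G H) : Fintype.card V = Fintype.card W := by
  classical
  rw [QCospectral, qCharPoly_eq_charpoly, qCharPoly_eq_charpoly] at h
  rw [← charpoly_natDegree_eq_dim (signlessLapMatrix ℝ G), h, charpoly_natDegree_eq_dim]

theorem qCospectral_compl_iff [DecidableRel G.Adj] [DecidableRel H.Adj]
    (hcard : Fintype.card V = Fintype.card W) :
    QCospectral Gᶜ Hᶜ ↔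
      (signlessLapMatrix ℝ G - of 1).charpoly = (signlessLapMatrix ℝ H - of 1).charpoly := by
  rw [QCospectral, qCharPoly_eq_charpoly, qCharPoly_eq_charpoly]
  refine ⟨fun h => ?_, fun h => ?_⟩
  · rw [charpoly_signlessLapMatrix_sub_of_one, h, hcard, ← charpoly_signlessLapMatrix_sub_of_one]
  · rw [charpoly_signlessLapMatrix_compl, h, hcard, ← charpoly_signlessLapMatrix_compl]

theorem GenQCospectral.compl (h : GenQCospectral G H) : GenQCospectral Gᶜ Hᶜ := by
  refine ⟨h.2, ?_⟩
  rw [compl_compl, compl_compl]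
  exact h.1

theorem GenQCospectral.congr (h : GenQCospectral G H) (e : G ≃g G') (f : H ≃g H') :
    GenQCospectral G' H' :=
  ⟨(qCharPoly_eq_of_iso e).symm.trans (h.1.trans (qCharPoly_eq_of_iso f)),
    (qCharPoly_compl_eq_of_iso e).symm.trans (h.2.trans (qCharPoly_compl_eq_of_iso f))⟩

theorem QCospectral.genQCospectral_compl (h : QCospectral G Gᶜ) : GenQCospectral G Gᶜ := by
  refine ⟨h, ?_⟩
  rw [compl_compl]
  exact Eq.symm h

theorem GenQCospectral.sum_of_unique {U : Type} [Fintype U] [DecidableEq U] [Unique U]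
    (h : GenQCospectral G H) (K : SimpleGraph U) : GenQCospectral (G ⊕g K) (H ⊕g K) := by
  classical
  have hcard := h.1.card_eq
  refine ⟨by rw [QCospectral, qCharPoly_sum, qCharPoly_sum, h.1], ?_⟩
  rw [qCospectral_compl_iff (by simp [hcard]), signlessLapMatrix_sum, signlessLapMatrix_sum,
    charpoly_fromBlocks_zero_sub_of_one, charpoly_fromBlocks_zero_sub_of_one,
    (qCospectral_compl_iff hcard).mp h.2, ← qCharPoly_eq_charpoly G,
    ← qCharPoly_eq_charpoly H, h.1]

end QCospectral

section ThresholdGraph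

open Matrix Polynomial

variable {n : ℕ}

/-- The threshold graph with creation sequence `s`: vertex `0` is the initial one, and vertex
`i.succ` is dominating at the time of its insertion if `s i` is true, isolated otherwise. The value
`false` assigned to vertex `0` is arbitrary, since `max i j = 0` only for `i = j`. -/
def thresholdGraph (s : Fin n → Bool) : SimpleGraph (Fin (n + 1)) where
  Adj i j := i ≠ j ∧ (Fin.cons false s : Fin (n + 1) → Bool) (max i j) = true
  symm := ⟨fun i j h => ⟨h.1.symm, max_comm i j ▸ h.2⟩⟩
  loopless := ⟨fun _ h => h.1 rfl⟩

theorem thresholdGraph_adj {s : Fin n → Bool} {i j : Fin (n + 1)} :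
    (thresholdGraph s).Adj i j ↔
      i ≠ j ∧ (Fin.cons false s : Fin (n + 1) → Bool) (max i j) = true := Iff.rfl

instance (s : Fin n → Bool) : DecidableRel (thresholdGraph s).Adj :=
  fun _ _ => inferInstanceAs (Decidable (_ ∧ _))

theorem thresholdGraph_adj_of_lt {s : Fin n → Bool} {i j : Fin (n + 1)} (h : j < i) :
    (thresholdGraph s).Adj i j ↔ (Fin.cons false s : Fin (n + 1) → Bool) i = true := by
  simp [thresholdGraph_adj, h.ne', max_eq_left h.le]

theorem thresholdGraph_snoc_adj_castSucc {s : Fin n → Bool} {b : Bool} {i j : Fin (n + 1)} :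
    (thresholdGraph (Fin.snoc s b)).Adj i.castSucc j.castSucc ↔ (thresholdGraph s).Adj i j := by
  simp only [thresholdGraph_adj, Fin.cons_snoc_eq_snoc_cons,
    ← Fin.strictMono_castSucc.monotone.map_max, Fin.snoc_castSucc, ne_eq, Fin.castSucc_inj]

theorem thresholdGraph_snoc_adj_last {s : Fin n → Bool} {b : Bool} {i : Fin (n + 2)} :
    (thresholdGraph (Fin.snoc s b)).Adj i (Fin.last (n + 1)) ↔
      i ≠ Fin.last (n + 1) ∧ b = true := by
  simp [thresholdGraph_adj, max_eq_right (Fin.le_last i)]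

theorem thresholdGraph_compl (s : Fin n → Bool) :
    (thresholdGraph s)ᶜ = thresholdGraph (not ∘ s) := by
  have hlt {i j : Fin (n + 1)} (h : j < i) :
      (thresholdGraph s)ᶜ.Adj i j ↔ (thresholdGraph (not ∘ s)).Adj i j := by
    rw [compl_adj, thresholdGraph_adj_of_lt h, thresholdGraph_adj_of_lt h]
    cases i using Fin.cases with
    | zero => exact absurd h (Fin.not_lt_zero j)
    | succ k => simp [h.ne']
  ext i j
  rcases lt_trichotomy i j with h | rfl | h
  · rw [adj_comm, hlt h, adj_comm]
  · simp
  · exact hlt h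

theorem thresholdGraph_snoc_true (s : Fin n → Bool) :
    thresholdGraph (Fin.snoc s true) = (thresholdGraph (Fin.snoc (not ∘ s) false))ᶜ := by
  rw [thresholdGraph_compl, Fin.comp_snoc, ← Function.comp_assoc,
    Function.Involutive.comp_self Bool.not_not]
  rfl

theorem isThreshold_thresholdGraph (s : Fin n → Bool) : IsThreshold (thresholdGraph s) := by
  refine ⟨n.succ_pos, 1, fun i => ?_⟩
  simp only [Equiv.Perm.one_apply]
  cases h : (Fin.cons false s : Fin (n + 1) → Bool) i
  · exact .inl fun j hj => by simp [thresholdGraph_adj_of_lt hj, h]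
  · exact .inr fun j hj => by simp [thresholdGraph_adj_of_lt hj, h]

/-- The last vertex of a threshold graph is isolated if its entry in the creation sequence is
`false`, so that it splits off as a summand. -/
def thresholdGraphSnocFalseIso (s : Fin n → Bool) :
    thresholdGraph s ⊕g (⊥ : SimpleGraph (Fin 1)) ≃g thresholdGraph (Fin.snoc s false) where
  toEquiv := finSumFinEquiv
  map_rel_iff' {u v} := by
    have hlast (i : Fin 1) : Fin.natAdd (n + 1) i = Fin.last (n + 1) := by
      rw [Subsingleton.elim i 0]; rfl
    rcases u with u | u <;> rcases v with v | v
    · exact thresholdGraph_snoc_adj_castSucc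
    · simp [hlast, thresholdGraph_snoc_adj_last]
    · simp [hlast, thresholdGraph_snoc_adj_last, adj_comm]
    · simp [hlast]

theorem exists_thresholdGraph_iso {G : SimpleGraph (Fin (n + 1))} (hG : IsThreshold G) :
    ∃ s : Fin n → Bool, Nonempty (thresholdGraph s ≃g G) := by
  classical
  obtain ⟨-, σ, hσ⟩ := hG
  have hadj (i j) (hji : j < i) : G.Adj (σ i) (σ j) ↔ G.Adj (σ i) (σ 0) := by
    have h0 : 0 < i := (Fin.zero_le j).trans_lt hji
    rcases hσ i with h | h <;> simp [h j hji, h 0 h0]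
  let s (i : Fin n) : Bool := G.Adj (σ i.succ) (σ 0)
  have hs (i : Fin (n + 1)) :
      (Fin.cons false s : Fin (n + 1) → Bool) i = true ↔ G.Adj (σ i) (σ 0) := by
    cases i using Fin.cases <;> simp [s]
  refine ⟨s, ⟨σ, fun {i j} => ?_⟩⟩
  rcases lt_trichotomy i j with h | rfl | h
  · rw [G.adj_comm, (thresholdGraph s).adj_comm, thresholdGraph_adj_of_lt h, hs, hadj j i h]
  · simp
  · rw [thresholdGraph_adj_of_lt h, hs, hadj i j h]

theorem zero_mem_degreeMultiset_thresholdGraph_snoc {s : Fin n → Bool} {b : Bool} :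
    0 ∈ degreeMultiset (thresholdGraph (Fin.snoc s b)) ↔ b = false := by
  simp only [degreeMultiset, Multiset.mem_map, Finset.mem_val, Finset.mem_univ, true_and,
    degree_eq_zero]
  constructor
  · rintro ⟨v, hv⟩
    by_contra hb
    rw [Bool.not_eq_false] at hb
    by_cases hlast : v = Fin.last (n + 1)
    · subst hlast
      exact hv 0 (adj_symm _ (thresholdGraph_snoc_adj_last.mpr ⟨Fin.last_pos.ne, hb⟩))
    · exact hv _ (thresholdGraph_snoc_adj_last.mpr ⟨hlast, hb⟩)
  · rintro rfl
    exact ⟨Fin.last (n + 1), fun w hw => by simpa [thresholdGraph_snoc_adj_last] using hw.symm⟩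

theorem degreeMultiset_thresholdGraph_snoc_false (s : Fin n → Bool) :
    degreeMultiset (thresholdGraph (Fin.snoc s false)) =
      0 ::ₘ degreeMultiset (thresholdGraph s) := by
  classical
  rw [← degreeMultiset_eq_of_iso (thresholdGraphSnocFalseIso s), degreeMultiset_sum, add_comm]
  simp [degreeMultiset]

theorem degreeMultiset_thresholdGraph_not (s : Fin n → Bool) :
    degreeMultiset (thresholdGraph (not ∘ s)) =
      (degreeMultiset (thresholdGraph s)).map (n - ·) := by
  simp only [← thresholdGraph_compl, degreeMultiset_compl, Fintype.card_fin, Nat.add_sub_cancel]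

theorem degreeMultiset_thresholdGraph_injective :
    Function.Injective fun s : Fin n → Bool => degreeMultiset (thresholdGraph s) := by
  induction n with
  | zero => exact fun s t _ => Subsingleton.elim s t
  | succ n ih =>
    have hfalse {s t : Fin n → Bool} (h : degreeMultiset (thresholdGraph (Fin.snoc s false)) =
        degreeMultiset (thresholdGraph (Fin.snoc t false))) : s = t := by
      rw [degreeMultiset_thresholdGraph_snoc_false, degreeMultiset_thresholdGraph_snoc_false,
        Multiset.cons_inj_right] at h
      exact ih h
    intro s t h
    induction s using Fin.snocCases with | _ s a
    induction t using Fin.snocCases with | _ t b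
    dsimp only at h
    obtain rfl : a = b := by
      rw [Bool.eq_iff_iff, ← not_iff_not, Bool.not_eq_true, Bool.not_eq_true,
        ← zero_mem_degreeMultiset_thresholdGraph_snoc (s := s), h,
        zero_mem_degreeMultiset_thresholdGraph_snoc]
    cases a with
    | false => rw [hfalse h]
    | true =>
      have hnot := congrArg (Multiset.map (n + 1 - ·)) h
      rw [← degreeMultiset_thresholdGraph_not, ← degreeMultiset_thresholdGraph_not, Fin.comp_snoc,
        Fin.comp_snoc] at hnot
      rw [Bool.not_injective.comp_left (hfalse hnot)]

theorem eq_of_thresholdGraph_iso {s t : Fin n → Bool}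
    (h : Nonempty (thresholdGraph s ≃g thresholdGraph t)) : s = t :=
  h.elim fun e => degreeMultiset_thresholdGraph_injective (degreeMultiset_eq_of_iso e)

theorem GenQCospectral.thresholdGraph_snoc {k l : ℕ} {s : Fin k → Bool} {t : Fin l → Bool}
    (h : GenQCospectral (thresholdGraph s) (thresholdGraph t)) (b : Bool) :
    GenQCospectral (thresholdGraph (Fin.snoc s b : Fin (k + 1) → Bool))
      (thresholdGraph (Fin.snoc t b : Fin (l + 1) → Bool)) := by
  have hfalse {k l : ℕ} {s : Fin k → Bool} {t : Fin l → Bool}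
      (h : GenQCospectral (thresholdGraph s) (thresholdGraph t)) :
      GenQCospectral (thresholdGraph (Fin.snoc s false : Fin (k + 1) → Bool))
        (thresholdGraph (Fin.snoc t false : Fin (l + 1) → Bool)) :=
    (h.sum_of_unique ⊥).congr (thresholdGraphSnocFalseIso s) (thresholdGraphSnocFalseIso t)
  cases b with
  | false => exact hfalse h
  | true =>
    rw [thresholdGraph_snoc_true, thresholdGraph_snoc_true]
    refine (hfalse ?_).compl
    rw [← thresholdGraph_compl, ← thresholdGraph_compl]
    exact h.compl

theorem GenQCospectral.thresholdGraph_append {k l m : ℕ} {p : Fin k → Bool} {q : Fin l → Bool}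
    (h : GenQCospectral (thresholdGraph p) (thresholdGraph q)) (s : Fin m → Bool) :
    GenQCospectral (thresholdGraph (Fin.append p s)) (thresholdGraph (Fin.append q s)) := by
  induction s using Fin.snocInduction with
  | elim0 => simpa [Fin.append_right_nil] using h
  | snoc s b ih =>
    rw [Fin.append_snoc, Fin.append_snoc]
    exact ih.thresholdGraph_snoc b

/-- The creation sequence of the claw `K₁,₃`, which seeds the cospectral pairs of threshold graphs:
`K₁,₃` is `Q`-cospectral with its complement `K₃ ∪ K₁`. -/
def clawSeq : Fin 3 → Bool := ![false, false, true]

theorem qCharPoly_claw :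
    qCharPoly (thresholdGraph clawSeq) = X * (X - 1) ^ 2 * (X - 4) := by
  have hdegree : ∀ i, (thresholdGraph clawSeq).degree i = if i = 3 then 3 else 1 := by decide
  have hadj : ∀ i j, (thresholdGraph clawSeq).Adj i j ↔ i ≠ j ∧ (i = 3 ∨ j = 3) := by decide
  have hmatrix : signlessLapMatrix ℝ (thresholdGraph clawSeq) =
      !![1, 0, 0, 1; 0, 1, 0, 1; 0, 0, 1, 1; 1, 1, 1, 3] := by
    ext i j
    fin_cases i <;> fin_cases j <;> simp [signlessLapMatrix, degMatrix, hdegree, hadj]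
  refine Polynomial.funext fun x => ?_
  rw [qCharPoly_eq_charpoly, hmatrix]
  simp [eval_charpoly, det_succ_row_zero, Fin.sum_univ_succ, Fin.succAbove]
  ring

theorem qCharPoly_claw_compl :
    qCharPoly (thresholdGraph clawSeq)ᶜ = X * (X - 1) ^ 2 * (X - 4) := by
  have hdegree : ∀ i, (thresholdGraph clawSeq)ᶜ.degree i = if i = 3 then 0 else 2 := by decide
  have hadj : ∀ i j, (thresholdGraph clawSeq)ᶜ.Adj i j ↔ i ≠ j ∧ i ≠ 3 ∧ j ≠ 3 := by decide
  have hmatrix : signlessLapMatrix ℝ (thresholdGraph clawSeq)ᶜ =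
      !![2, 1, 1, 0; 1, 2, 1, 0; 1, 1, 2, 0; 0, 0, 0, 0] := by
    ext i j
    fin_cases i <;> fin_cases j <;> simp [signlessLapMatrix, degMatrix, hdegree, hadj, -compl_adj]
  refine Polynomial.funext fun x => ?_
  rw [qCharPoly_eq_charpoly, hmatrix]
  simp [eval_charpoly, det_succ_row_zero, Fin.sum_univ_succ, Fin.succAbove]
  ring

theorem qCospectral_claw_compl :
    QCospectral (thresholdGraph clawSeq) (thresholdGraph clawSeq)ᶜ :=
  qCharPoly_claw.trans qCharPoly_claw_compl.symm

end ThresholdGraph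

section ClassCount

variable {n : ℕ} {P : SimpleGraph (Fin n) → Prop} {ι : Type*}

theorem classCount_le_card [Finite ι] (f : ι → SimpleGraph (Fin n)) (hf : ∀ i, P (f i))
    (hsurj : ∀ G, P G → ∃ i, Nonempty (f i ≃g G)) : classCount n P ≤ Nat.card ι := by
  refine Nat.card_le_card_of_surjective (fun i => Quot.mk _ ⟨f i, hf i⟩) ?_
  rintro ⟨G, hG⟩
  obtain ⟨i, hi⟩ := hsurj G hG
  exact ⟨i, Quot.sound hi⟩

theorem card_le_classCount (f : ι → SimpleGraph (Fin n)) (hf : ∀ i, P (f i))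
    (hinj : ∀ i j, Nonempty (f i ≃g f j) → i = j) : Nat.card ι ≤ classCount n P := by
  refine Nat.card_le_card_of_injective (fun i => Quot.mk _ ⟨f i, hf i⟩) fun i j hij => ?_
  have hequiv : Equivalence fun G H : {G // P G} => Nonempty (G.1 ≃g H.1) :=
    ⟨fun G => ⟨Iso.refl⟩, fun ⟨e⟩ => ⟨e.symm⟩, fun ⟨e⟩ ⟨e'⟩ => ⟨e'.comp e⟩⟩
  exact hinj i j (hequiv.eqvGen_iff.mp (Quot.eqvGen_exact hij))

theorem classCount_isThreshold (n : ℕ) :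
    classCount (n + 1) (fun G => IsThreshold G) = 2 ^ n := by
  have hcard : Nat.card (Fin n → Bool) = 2 ^ n := by simp
  rw [← hcard]
  apply le_antisymm
  · exact classCount_le_card thresholdGraph isThreshold_thresholdGraph
      fun _ => exists_thresholdGraph_iso
  · exact card_le_classCount thresholdGraph isThreshold_thresholdGraph
      fun _ _ => eq_of_thresholdGraph_iso

theorem two_pow_le_classCount_qCospectral_mate (m : ℕ) :
    2 ^ m ≤ classCount (3 + m + 1) (fun G => IsThreshold G ∧
      ∃ H : SimpleGraph (Fin (3 + m + 1)), QCospectral G H ∧ ¬ Nonempty (G ≃g H)) := by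
  have hcard : Nat.card (Fin m → Bool) = 2 ^ m := by simp
  rw [← hcard]
  refine card_le_classCount (fun s => thresholdGraph (Fin.append clawSeq s))
    (fun s => ⟨isThreshold_thresholdGraph _, thresholdGraph (Fin.append (not ∘ clawSeq) s),
      ?_, fun he => ?_⟩) fun s t he => ?_
  · have hclaw := qCospectral_claw_compl.genQCospectral_compl
    rw [thresholdGraph_compl] at hclaw
    exact (hclaw.thresholdGraph_append s).1
  · have h0 := congrFun (eq_of_thresholdGraph_iso he) (Fin.castAdd m 0)
    simp at h0
  · funext i
    simpa using congrFun (eq_of_thresholdGraph_iso he) (Fin.natAdd 3 i)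

end ClassCount

/-- **Carvalho et al.** For each `n ≥ 4`, at least `1/8` of the (isomorphism classes of)
threshold graphs of order `n` have a `Q`-cospectral mate. -/
theorem threshold_qCospectral_mate_proportion {n : ℕ} (hn : 4 ≤ n) :
    (classCount n (fun G => IsThreshold G) : ℝ) / 8 ≤
      (classCount n (fun G => IsThreshold G ∧
        ∃ H : SimpleGraph (Fin n), QCospectral G H ∧ ¬ Nonempty (G ≃g H)) : ℝ) := by
  obtain ⟨m, rfl⟩ : ∃ m, n = 3 + m + 1 := ⟨n - 4, by omega⟩
  calc
    (classCount (3 + m + 1) (fun G => IsThreshold G) : ℝ) / 8 = 2 ^ m := by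
      rw [classCount_isThreshold, Nat.cast_pow, pow_add]
      norm_num
    _ ≤ _ := by exact_mod_cast two_pow_le_classCount_qCospectral_mate m
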